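/- Let 2 ≤ k ≤ n−1, let X = (ℝ^n, ‖·‖) with ‖x‖ = max{ |x_1| + … + |x_{n−k+2}| , |x_{n−k+3}|, …, |x_n| }, and let Y = {x ∈ ℝ^n : x_1 + x_2 + x_3 = 0, x_i = 0 for 4 ≤ i ≤ n−k+2}. Then λ(Y,X) = 4/3 and the affine dimension of the set of minimal projections from X onto Y equals k(n−k) − 2. -/

import Mathlib

open Metric Module

noncomputable section

variable {X : Type*} [NormedAddCommGroup X] [NormedSpace ℝ X]

def IsProjOnto (Y : Submodule ℝ X) (P : X →L[ℝ] X) : Prop :=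
  (∀ x, P x ∈ Y) ∧ ∀ y ∈ Y, P y = y

def relProjConst (Y : Submodule ℝ X) : ℝ :=
  sInf {c | ∃ P : X →L[ℝ] X, IsProjOnto Y P ∧ ‖P‖ = c}

def MinProjSet (Y : Submodule ℝ X) : Set (X →L[ℝ] X) :=
  {P | IsProjOnto Y P ∧ ‖P‖ = relProjConst Y}

def adim {M : Type*} [AddCommGroup M] [Module ℝ M] (S : Set M) : ℕ :=
  finrank ℝ (affineSpan ℝ S).direction


abbrev IdxA (n m : ℕ) := {i : Fin n // 3 ≤ (i : ℕ) ∧ (i : ℕ) < m}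
abbrev IdxB (n m : ℕ) := {i : Fin n // m ≤ (i : ℕ)}
abbrev QPar (n m : ℕ) := ℝ × ℝ × (IdxB n m → ℝ)
abbrev PPar (n m : ℕ) := (IdxB n m → ℝ) × (IdxA n m → QPar n m)

lemma card_IdxB (n m : ℕ) : Fintype.card (IdxB n m) = n - m := by
  have : Fintype.card (IdxB n m) = Fintype.card (Fin (n - m)) := by
    refine Fintype.card_congr ⟨fun i => ⟨i.1.1 - m, ?_⟩, fun i => ⟨⟨i.1 + m, ?_⟩, ?_⟩, ?_, ?_⟩
    · have := i.2; have := i.1.2; omega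
    · have := i.2; omega
    · simp
    · intro i; have := i.2; ext; simp; omega
    · intro i; ext; simp
  simpa using this

lemma card_IdxA (n m : ℕ) (hmn : m ≤ n) : Fintype.card (IdxA n m) = m - 3 := by
  have : Fintype.card (IdxA n m) = Fintype.card (Fin (m - 3)) := by
    refine Fintype.card_congr ⟨fun i => ⟨i.1.1 - 3, ?_⟩, fun i => ⟨⟨i.1 + 3, ?_⟩, ?_⟩, ?_, ?_⟩
    · have := i.2; omega
    · have := i.2; omega
    · have := i.2; simp; omega
    · intro i; have := i.2; ext; simp; omega
    · intro i; ext; simp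
  simpa using this

lemma finrank_PPar (n m : ℕ) (hmn : m ≤ n) :
    finrank ℝ (PPar n m) = (n - m) + (m - 3) * (2 + (n - m)) := by
  have hq : finrank ℝ (QPar n m) = 2 + (n - m) := by
    simp only [Module.finrank_prod, Module.finrank_self, Module.finrank_pi, card_IdxB]
    omega
  rw [Module.finrank_prod, Module.finrank_pi, card_IdxB, Module.finrank_pi_fintype]
  simp only [hq, Finset.sum_const, Finset.card_univ, card_IdxA n m hmn, smul_eq_mul]

/-- coordinates of elements of `Y` -/
def psiM (n m : ℕ) : QPar n m →ₗ[ℝ] (Fin n → ℝ) where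
  toFun q := fun i => if (i : ℕ) = 0 then q.1 else if (i : ℕ) = 1 then q.2.1
    else if (i : ℕ) = 2 then -(q.1 + q.2.1) else if h : m ≤ (i : ℕ) then q.2.2 ⟨i, h⟩ else 0
  map_add' a b := by
    ext i; simp only [Pi.add_apply, Prod.fst_add, Prod.snd_add]; split_ifs <;> ring
  map_smul' c a := by
    ext i; simp only [Pi.smul_apply, Prod.smul_fst, Prod.smul_snd, smul_eq_mul, RingHom.id_apply]
    split_ifs <;> ring

def InY (n m : ℕ) (h3 : 3 ≤ n) (y : Fin n → ℝ) : Prop :=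
  y ⟨0, by omega⟩ + y ⟨1, by omega⟩ + y ⟨2, by omega⟩ = 0 ∧
    ∀ i : Fin n, 3 ≤ (i : ℕ) → (i : ℕ) < m → y i = 0

lemma psiM_mem {n m : ℕ} (h3 : 3 ≤ n) (hm : 3 ≤ m) (q : QPar n m) : InY n m h3 (psiM n m q) := by
  refine ⟨?_, ?_⟩
  · simp [psiM]
  · intro i h1 h2
    simp only [psiM, LinearMap.coe_mk, AddHom.coe_mk]
    rw [if_neg (by omega), if_neg (by omega), if_neg (by omega), dif_neg (by omega)]

lemma psiM_B {n m : ℕ} (hm : 3 ≤ m) (q : QPar n m) (l : IdxB n m) :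
    psiM n m q l.1 = q.2.2 l := by
  have := l.2
  simp only [psiM, LinearMap.coe_mk, AddHom.coe_mk]
  rw [if_neg (by omega), if_neg (by omega), if_neg (by omega), dif_pos this]

lemma psiM_0 {n m : ℕ} (h3 : 3 ≤ n) (q : QPar n m) : psiM n m q ⟨0, by omega⟩ = q.1 := by
  simp [psiM]
lemma psiM_1 {n m : ℕ} (h3 : 3 ≤ n) (q : QPar n m) : psiM n m q ⟨1, by omega⟩ = q.2.1 := by
  simp [psiM]
lemma psiM_2 {n m : ℕ} (h3 : 3 ≤ n) (q : QPar n m) :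
    psiM n m q ⟨2, by omega⟩ = -(q.1 + q.2.1) := by
  simp [psiM]

/-- extraction of parameters -/
def rhoM (n m : ℕ) (h3 : 3 ≤ n) (y : Fin n → ℝ) : QPar n m :=
  (y ⟨0, by omega⟩, y ⟨1, by omega⟩, fun l => y l.1)

lemma fin_cases4 {n : ℕ} (m : ℕ) (h3 : 3 ≤ n) (i : Fin n) :
    i = ⟨0, by omega⟩ ∨ i = ⟨1, by omega⟩ ∨ i = ⟨2, by omega⟩ ∨
      (3 ≤ (i : ℕ) ∧ (i : ℕ) < m) ∨ m ≤ (i : ℕ) := by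
  simp only [Fin.ext_iff]; omega

lemma psi_rho {n m : ℕ} (h3 : 3 ≤ n) (hm : 3 ≤ m) (y : Fin n → ℝ) (hy : InY n m h3 y) :
    psiM n m (rhoM n m h3 y) = y := by
  ext i
  rcases fin_cases4 m h3 i with rfl | rfl | rfl | h | h
  · rw [psiM_0 h3]; rfl
  · rw [psiM_1 h3]; rfl
  · rw [psiM_2 h3]; have := hy.1; simp only [rhoM]; linarith
  · rw [(psiM_mem h3 hm _).2 i h.1 h.2, hy.2 i h.1 h.2]
  · exact psiM_B hm _ ⟨i, h⟩

lemma psiM_inj {n m : ℕ} (h3 : 3 ≤ n) (hm : 3 ≤ m) (q : QPar n m) (h : psiM n m q = 0) :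
    q = 0 := by
  refine Prod.ext ?_ (Prod.ext ?_ ?_)
  · rw [← psiM_0 h3 q, h]; rfl
  · rw [← psiM_1 h3 q, h]; rfl
  · ext l; rw [← psiM_B hm q l, h]; rfl

def fsum {n : ℕ} (h3 : 3 ≤ n) : (Fin n → ℝ) →ₗ[ℝ] ℝ :=
  LinearMap.proj ⟨0, by omega⟩ + LinearMap.proj ⟨1, by omega⟩ + LinearMap.proj ⟨2, by omega⟩

lemma fsum_apply {n : ℕ} (h3 : 3 ≤ n) (x : Fin n → ℝ) :
    fsum h3 x = x ⟨0, by omega⟩ + x ⟨1, by omega⟩ + x ⟨2, by omega⟩ := rfl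

def phiM (n m : ℕ) (h3 : 3 ≤ n) : PPar n m →ₗ[ℝ] ((Fin n → ℝ) →ₗ[ℝ] (Fin n → ℝ)) where
  toFun p := (fsum h3).smulRight (psiM n m (0, 0, p.1)) +
    ∑ j : IdxA n m, (LinearMap.proj (R := ℝ) (φ := fun _ : Fin n => ℝ) j.1).smulRight
      (psiM n m (p.2 j))
  map_add' a b := by
    have : ((0, 0, (a + b).1) : QPar n m) = (0, 0, a.1) + (0, 0, b.1) := by ext <;> simp
    refine LinearMap.ext fun x => ?_
    simp only [this, map_add, LinearMap.add_apply, LinearMap.sum_apply, LinearMap.smulRight_apply,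
      Prod.snd_add, Pi.add_apply, smul_add, Finset.sum_add_distrib]
    abel
  map_smul' c a := by
    have : ((0, 0, (c • a).1) : QPar n m) = c • (0, 0, a.1) := by ext <;> simp
    refine LinearMap.ext fun x => ?_
    simp only [this, map_smul, LinearMap.add_apply, LinearMap.sum_apply, LinearMap.smulRight_apply,
      Prod.smul_snd, Pi.smul_apply, smul_add, Finset.smul_sum, RingHom.id_apply,
      LinearMap.smul_apply]
    simp only [smul_comm c]

lemma phiM_apply {n m : ℕ} (h3 : 3 ≤ n) (p : PPar n m) (x : Fin n → ℝ) :
    phiM n m h3 p x = fsum h3 x • psiM n m (0, 0, p.1) +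
      ∑ j : IdxA n m, x j.1 • psiM n m (p.2 j) := by
  simp [phiM, LinearMap.sum_apply]

lemma phiM_zero_A {n m : ℕ} (h3 : 3 ≤ n) (p : PPar n m) (x : Fin n → ℝ)
    (hx : ∀ j : IdxA n m, x j.1 = 0) :
    phiM n m h3 p x = fsum h3 x • psiM n m (0, 0, p.1) := by
  rw [phiM_apply, Finset.sum_eq_zero, add_zero]
  intro j _; rw [hx j, zero_smul]

lemma phiM_single_A {n m : ℕ} (h3 : 3 ≤ n) (p : PPar n m) (j : IdxA n m) :
    phiM n m h3 p (Pi.single j.1 1) = psiM n m (p.2 j) := by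
  have hj := j.2.1
  have hf : fsum h3 (Pi.single j.1 (1:ℝ)) = 0 := by
    rw [fsum_apply, Pi.single_eq_of_ne, Pi.single_eq_of_ne, Pi.single_eq_of_ne] <;> 
      first | (intro h; rw [← h] at hj; simp at hj; done) | simp
  rw [phiM_apply, hf, zero_smul, zero_add, Finset.sum_eq_single j]
  · simp
  · intro b _ hb
    rw [Pi.single_eq_of_ne, zero_smul]
    intro h; exact hb (Subtype.ext h)
  · simp

lemma InY_psi_u {n m : ℕ} (h3 : 3 ≤ n) (u : IdxB n m → ℝ) (i : Fin n) (hi : (i : ℕ) < m) :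
    psiM n m (0, 0, u) i = 0 := by
  simp only [psiM, LinearMap.coe_mk, AddHom.coe_mk]
  split_ifs <;> first | omega | simp

lemma phiM_inj {n m : ℕ} (h3 : 3 ≤ n) (hm : 3 ≤ m) : Function.Injective (phiM n m h3) := by
  rw [injective_iff_map_eq_zero]
  intro p hp
  refine Prod.ext ?_ ?_
  · have h := phiM_zero_A h3 p (Pi.single ⟨0, by omega⟩ 1) (fun j => by
      rw [Pi.single_eq_of_ne]; intro h; have := j.2.1; rw [h] at this; simp at this)
    have hf : fsum h3 (Pi.single (⟨0, by omega⟩ : Fin n) (1:ℝ)) = 1 := by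
      simp [fsum_apply, Pi.single_apply]
    rw [hp, hf, one_smul] at h
    have := psiM_inj h3 hm _ h.symm
    exact congrArg (fun q => q.2.2) this
  · ext1 j
    have h := phiM_single_A h3 p j
    rw [hp] at h
    exact psiM_inj h3 hm _ h.symm

lemma phiM_mem {n m : ℕ} (h3 : 3 ≤ n) (hm : 3 ≤ m) (p : PPar n m) (x : Fin n → ℝ) :
    phiM n m h3 p x ∈ {y | InY n m h3 y} := by
  have e1 : phiM n m h3 p x = psiM n m (fsum h3 x • (0, 0, p.1) + ∑ j : IdxA n m, x j.1 • p.2 j) := by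
    rw [phiM_apply]; simp only [map_add, map_smul, map_sum]
  rw [e1]; exact psiM_mem h3 hm _

/-- Surjectivity: characterization of the range. -/
lemma phiM_surj {n m : ℕ} (h3 : 3 ≤ n) (hm : 3 ≤ m) (T : (Fin n → ℝ) →ₗ[ℝ] (Fin n → ℝ))
    (h1 : ∀ x, InY n m h3 (T x)) (h2 : ∀ y, InY n m h3 y → T y = 0)
    (h4 : T (Pi.single ⟨0, by omega⟩ 1) ⟨0, by omega⟩ = 0)
    (h5 : T (Pi.single ⟨0, by omega⟩ 1) ⟨1, by omega⟩ = 0) :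
    ∃ p, phiM n m h3 p = T := by
  refine ⟨(fun l => T (Pi.single ⟨0, by omega⟩ 1) l.1,
    fun j => rhoM n m h3 (T (Pi.single j.1 1))), ?_⟩
  have hu : psiM n m (0, 0, fun l => T (Pi.single ⟨0, by omega⟩ 1) l.1) =
      T (Pi.single ⟨0, by omega⟩ 1) := by
    rw [← psi_rho h3 hm _ (h1 (Pi.single ⟨0, by omega⟩ 1))]
    congr 1
    simp only [rhoM, h4, h5]
  have key : ∀ i : Fin n, (i : ℕ) < 3 →
      T (Pi.single i 1) = T (Pi.single ⟨0, by omega⟩ 1) := by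
    intro i hi
    rw [← sub_eq_zero, ← map_sub]
    apply h2
    constructor
    · rcases fin_cases4 m h3 i with rfl | rfl | rfl | h | h
      · simp
      · simp [Pi.single_apply]
      · simp [Pi.single_apply]
      · omega
      · omega
    · intro l hl _
      rw [Pi.sub_apply, Pi.single_eq_of_ne, Pi.single_eq_of_ne, sub_zero] <;>
        (intro h; rw [h] at hl; first | omega | (simp at hl; done))
  refine LinearMap.pi_ext' fun i => LinearMap.ext_ring ?_
  simp only [LinearMap.comp_apply, LinearMap.single_apply]
  by_cases hA : 3 ≤ (i : ℕ) ∧ (i : ℕ) < m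
  · rw [phiM_single_A h3 _ ⟨i, hA⟩]
    exact psi_rho h3 hm _ (h1 _)
  rw [phiM_zero_A]
  swap
  · intro j
    rw [Pi.single_eq_of_ne]
    intro h; apply hA; rw [← h]; exact j.2
  simp only
  rw [hu]
  by_cases hi : (i : ℕ) < 3
  · rw [key i hi]
    have hf : fsum h3 (Pi.single i (1:ℝ)) = 1 := by
      rcases fin_cases4 m h3 i with rfl | rfl | rfl | h | h
      · simp [fsum_apply, Pi.single_apply]
      · simp [fsum_apply, Pi.single_apply]
      · simp [fsum_apply, Pi.single_apply]
      · omega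
      · omega
    rw [hf, one_smul]
  · have hf : fsum h3 (Pi.single i (1:ℝ)) = 0 := by
      simp only [fsum_apply, Pi.single_apply, Fin.ext_iff]
      rw [if_neg (by omega), if_neg (by omega), if_neg (by omega)]; simp
    rw [hf, zero_smul]
    symm
    apply h2
    constructor
    · exact hf
    · intro l h1 h2
      rw [Pi.single_eq_of_ne]
      intro h; rw [h] at h1 h2; omega

/-- The minimal projection in coordinates. -/
def P0M (n m : ℕ) (h3 : 3 ≤ n) : (Fin n → ℝ) →ₗ[ℝ] (Fin n → ℝ) where
  toFun x := fun i => if (i : ℕ) < 3 then x i - fsum h3 x / 3 else if (i : ℕ) < m then 0 else x i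
  map_add' a b := by
    ext i; simp only [Pi.add_apply, map_add]; split_ifs <;> ring
  map_smul' c a := by
    ext i; simp only [Pi.smul_apply, map_smul, smul_eq_mul, RingHom.id_apply]
    split_ifs <;> ring

lemma P0M_mem {n m : ℕ} (h3 : 3 ≤ n) (x : Fin n → ℝ) :
    InY n m h3 (P0M n m h3 x) := by
  constructor
  · simp [P0M, fsum_apply]; ring
  · intro i h1 h2
    simp only [P0M, LinearMap.coe_mk, AddHom.coe_mk]
    rw [if_neg (by omega), if_pos h2]

lemma P0M_id {n m : ℕ} (h3 : 3 ≤ n) (y : Fin n → ℝ) (hy : InY n m h3 y) :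
    P0M n m h3 y = y := by
  ext i
  have hf : fsum h3 y = 0 := hy.1
  simp only [P0M, LinearMap.coe_mk, AddHom.coe_mk, hf]
  split_ifs with h1 h2
  · simp
  · exact (hy.2 i (by omega) h2).symm
  · rfl

lemma phiM_kill {n m : ℕ} (h3 : 3 ≤ n) (p : PPar n m) (y : Fin n → ℝ) (hy : InY n m h3 y) :
    phiM n m h3 p y = 0 := by
  have hf : fsum h3 y = 0 := hy.1
  rw [phiM_zero_A _ _ _ (fun j => hy.2 _ j.2.1 j.2.2), hf, zero_smul]

lemma sum_split {n m : ℕ} (h3 : 3 ≤ n) (hm : 3 ≤ m) (g : Fin n → ℝ) :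
    ∑ i ∈ Finset.univ.filter (fun i : Fin n => (i : ℕ) < m), g i =
      g ⟨0, by omega⟩ + g ⟨1, by omega⟩ + g ⟨2, by omega⟩ + ∑ j : IdxA n m, g j.1 := by
  have e1 : ∑ j : IdxA n m, g j.1 =
      ∑ i ∈ Finset.univ.filter (fun i : Fin n => 3 ≤ (i : ℕ) ∧ (i : ℕ) < m), g i := by
    exact (Finset.sum_subtype _ (by simp) g).symm
  have e2 : Finset.univ.filter (fun i : Fin n => (i : ℕ) < m) =
      ({⟨0, by omega⟩, ⟨1, by omega⟩, ⟨2, by omega⟩} : Finset (Fin n)) ∪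
      Finset.univ.filter (fun i : Fin n => 3 ≤ (i : ℕ) ∧ (i : ℕ) < m) := by
    ext i; simp [Fin.ext_iff]; omega
  rw [e1, e2, Finset.sum_union, Finset.sum_insert, Finset.sum_insert, Finset.sum_singleton]
  · ring
  · simp
  · simp
  · rw [Finset.disjoint_left]; intro i; simp [Fin.ext_iff]; omega

/-- Norm bound in coordinates. -/
lemma bound_l1 {n m : ℕ} (h3 : 3 ≤ n) (hm : 3 ≤ m) (p : PPar n m) (hp : ‖p‖ ≤ 1 / 3)
    (x : Fin n → ℝ) (c : ℝ)
    (hx : ∑ i ∈ Finset.univ.filter (fun i : Fin n => (i : ℕ) < m), |x i| ≤ c) :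
    ∑ i ∈ Finset.univ.filter (fun i : Fin n => (i : ℕ) < m), |(P0M n m h3 + phiM n m h3 p) x i|
      ≤ 4 / 3 * c := by
  rw [sum_split h3 hm] at hx ⊢
  have hz : ∑ j : IdxA n m, |(P0M n m h3 + phiM n m h3 p) x j.1| = 0 := by
    apply Finset.sum_eq_zero
    intro j _
    rw [LinearMap.add_apply, Pi.add_apply, (P0M_mem h3 x).2 _ j.2.1 j.2.2,
      (phiM_mem h3 hm p x).2 _ j.2.1 j.2.2]; simp
  have hq : ∀ j, ‖p.2 j‖ ≤ 1 / 3 := fun j =>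
    (norm_le_pi_norm p.2 j).trans ((norm_snd_le p).trans hp)
  have hq1 : ∀ j, |(p.2 j).1| ≤ 1 / 3 := fun j => (norm_fst_le (p.2 j)).trans (hq j)
  have hq2 : ∀ j, |(p.2 j).2.1| ≤ 1 / 3 := fun j =>
    (norm_fst_le (p.2 j).2).trans ((norm_snd_le (p.2 j)).trans (hq j))
  have hc : ∀ i : Fin n, (i : ℕ) < 3 → |(P0M n m h3 + phiM n m h3 p) x i| ≤
      |x i - fsum h3 x / 3| + ∑ j : IdxA n m, |x j.1| * |psiM n m (p.2 j) i| := by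
    intro i hi
    have : (P0M n m h3 + phiM n m h3 p) x i =
      (x i - fsum h3 x / 3) + ∑ j : IdxA n m, x j.1 * psiM n m (p.2 j) i := by
      rw [LinearMap.add_apply, phiM_apply]
      simp only [Pi.add_apply, Pi.smul_apply, Finset.sum_apply, smul_eq_mul,
        InY_psi_u h3 p.1 i (by omega)]
      simp [P0M, hi]
    rw [this]
    refine (abs_add_le _ _).trans (add_le_add le_rfl ?_)
    refine (Finset.abs_sum_le_sum_abs _ _).trans (le_of_eq ?_)
    simp only [abs_mul]
  have hsum : ∑ j : IdxA n m, |x j.1| * |psiM n m (p.2 j) ⟨0, by omega⟩| +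
      ∑ j : IdxA n m, |x j.1| * |psiM n m (p.2 j) ⟨1, by omega⟩| +
      ∑ j : IdxA n m, |x j.1| * |psiM n m (p.2 j) ⟨2, by omega⟩| ≤
      4 / 3 * ∑ j : IdxA n m, |x j.1| := by
    rw [← Finset.sum_add_distrib, ← Finset.sum_add_distrib, Finset.mul_sum]
    refine Finset.sum_le_sum fun j _ => ?_
    rw [psiM_0 h3, psiM_1 h3, psiM_2 h3, abs_neg]
    have := abs_add_le (p.2 j).1 (p.2 j).2.1
    have := hq1 j
    have := hq2 j
    nlinarith [abs_nonneg (x j.1)]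
  have k0 := hc ⟨0, by omega⟩ (by simp)
  have k1 := hc ⟨1, by omega⟩ (by simp)
  have k2 := hc ⟨2, by omega⟩ (by simp)
  rw [fsum_apply] at k0 k1 k2
  rw [hz]
  have hmain : ∀ a b d : ℝ, |a - (a + b + d) / 3| + |b - (a + b + d) / 3| + |d - (a + b + d) / 3|
      ≤ 4 / 3 * (|a| + |b| + |d|) := by
    intro a b d
    have ha := abs_le.1 (le_refl |a|)
    have hb := abs_le.1 (le_refl |b|)
    have hd := abs_le.1 (le_refl |d|)
    have g : ∀ a b d : ℝ, |a - (a + b + d) / 3| ≤ 2/3 * |a| + 1/3 * |b| + 1/3 * |d| := by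
      intro a b d
      have ha := abs_le.1 (le_refl |a|)
      have hb := abs_le.1 (le_refl |b|)
      have hd := abs_le.1 (le_refl |d|)
      rw [abs_le]; constructor <;> linarith
    have g1 := g a b d
    have g2 := g b a d
    have g3 := g d a b
    rw [show b + a + d = a + b + d by ring] at g2
    rw [show d + a + b = a + b + d by ring] at g3
    linarith
  have := hmain (x ⟨0, by omega⟩) (x ⟨1, by omega⟩) (x ⟨2, by omega⟩)
  linarith

lemma bound_linf {n m : ℕ} (h3 : 3 ≤ n) (hm : 3 ≤ m) (p : PPar n m) (hp : ‖p‖ ≤ 1 / 3)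
    (x : Fin n → ℝ) (c : ℝ)
    (hx : ∑ i ∈ Finset.univ.filter (fun i : Fin n => (i : ℕ) < m), |x i| ≤ c)
    (l : Fin n) (hl : m ≤ (l : ℕ)) (hxl : |x l| ≤ c) :
    |(P0M n m h3 + phiM n m h3 p) x l| ≤ 4 / 3 * c := by
  rw [sum_split h3 hm] at hx
  have hu : |p.1 ⟨l, hl⟩| ≤ 1 / 3 :=
    (norm_le_pi_norm p.1 ⟨l, hl⟩).trans ((norm_fst_le p).trans hp)
  have hq : ∀ j, |(p.2 j).2.2 ⟨l, hl⟩| ≤ 1 / 3 := fun j =>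
    (norm_le_pi_norm (p.2 j).2.2 ⟨l, hl⟩).trans ((norm_snd_le (p.2 j).2).trans
    ((norm_snd_le (p.2 j)).trans ((norm_le_pi_norm p.2 j).trans ((norm_snd_le p).trans hp))))
  have e1 : (P0M n m h3 + phiM n m h3 p) x l = x l + (fsum h3 x * p.1 ⟨l, hl⟩ +
      ∑ j : IdxA n m, x j.1 * (p.2 j).2.2 ⟨l, hl⟩) := by
    rw [LinearMap.add_apply, phiM_apply]
    simp only [Pi.add_apply, Pi.smul_apply, Finset.sum_apply, smul_eq_mul]
    have hB : ∀ q, psiM n m q l = q.2.2 ⟨l, hl⟩ := fun q => psiM_B hm q ⟨l, hl⟩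
    simp only [hB]
    congr 1
    simp only [P0M, LinearMap.coe_mk, AddHom.coe_mk]
    rw [if_neg (by omega), if_neg (by omega)]
  have e2 : |∑ j : IdxA n m, x j.1 * (p.2 j).2.2 ⟨l, hl⟩| ≤ 1 / 3 * ∑ j : IdxA n m, |x j.1| := by
    rw [Finset.mul_sum]
    refine (Finset.abs_sum_le_sum_abs _ _).trans (Finset.sum_le_sum fun j _ => ?_)
    rw [abs_mul, mul_comm]
    exact mul_le_mul_of_nonneg_right (hq j) (abs_nonneg _)
  have e3 : |fsum h3 x * p.1 ⟨l, hl⟩| ≤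
      (|x ⟨0, by omega⟩| + |x ⟨1, by omega⟩| + |x ⟨2, by omega⟩|) * (1 / 3) := by
    rw [abs_mul, fsum_apply]
    exact mul_le_mul (abs_add_three _ _ _) hu (abs_nonneg _) (by positivity)
  rw [e1]
  have a1 := abs_add_le (x l) (fsum h3 x * p.1 ⟨l, hl⟩ +
      ∑ j : IdxA n m, x j.1 * (p.2 j).2.2 ⟨l, hl⟩)
  have a2 := abs_add_le (fsum h3 x * p.1 ⟨l, hl⟩)
      (∑ j : IdxA n m, x j.1 * (p.2 j).2.2 ⟨l, hl⟩)
  linarith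

/-- Let `2 ≤ k ≤ n - 1` and let `X` be `ℝⁿ` (identified via `e`) with the norm
`‖x‖ = max { |x₀| + ⋯ + |x_{n-k+1}|, |x_{n-k+2}|, …, |x_{n-1}| }` (0-indexed), and let
`Y = {x : x₀ + x₁ + x₂ = 0 and x_i = 0 for 3 ≤ i < n - k + 2}`. Then `λ(Y, X) = 4/3`
and the affine dimension of the set of minimal projections equals `k(n-k) - 2`. -/
theorem mixed_norm_example_adim {n k : ℕ} (hk2 : 2 ≤ k) (hkn : k ≤ n - 1)
    (e : X ≃ₗ[ℝ] (Fin n → ℝ))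
    (hnorm : ∀ x : X,
      ‖x‖ = max
        (∑ i ∈ Finset.univ.filter (fun i : Fin n => (i : ℕ) < n - k + 2), |e x i|)
        (((Finset.univ.filter (fun i : Fin n => n - k + 2 ≤ (i : ℕ))).sup
            fun i => ‖e x i‖₊ : NNReal) : ℝ))
    (Y : Submodule ℝ X)
    (hY : ∀ x : X, x ∈ Y ↔
      (e x ⟨0, by omega⟩ + e x ⟨1, by omega⟩ + e x ⟨2, by omega⟩ = 0 ∧
        ∀ i : Fin n, 3 ≤ (i : ℕ) → (i : ℕ) < n - k + 2 → e x i = 0)) :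
    relProjConst Y = 4 / 3 ∧ adim (MinProjSet Y) = k * (n - k) - 2 := by
  have h3 : 3 ≤ n := by omega
  set m := n - k + 2 with hmdef
  have hm : 3 ≤ m := by omega
  have hmn : m ≤ n := by omega
  have hYI : ∀ x : X, x ∈ Y ↔ InY n m h3 (e x) := hY
  have hfd : FiniteDimensional ℝ X := e.symm.finiteDimensional
  have hle : ∀ (x : X) (c : ℝ), 0 ≤ c → (‖x‖ ≤ c ↔
      (∑ i ∈ Finset.univ.filter (fun i : Fin n => (i : ℕ) < m), |e x i| ≤ c ∧
        ∀ l : Fin n, m ≤ (l : ℕ) → |e x l| ≤ c)) := by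
    intro x c hc
    rw [hnorm, max_le_iff]
    refine and_congr Iff.rfl ?_
    lift c to NNReal using hc
    rw [NNReal.coe_le_coe, Finset.sup_le_iff]
    simp only [Finset.mem_filter, Finset.mem_univ, true_and]
    refine forall_congr' fun l => imp_congr Iff.rfl ?_
    rw [← NNReal.coe_le_coe, coe_nnnorm, Real.norm_eq_abs]
  -- conjugation
  let C : ((Fin n → ℝ) →ₗ[ℝ] (Fin n → ℝ)) ≃ₗ[ℝ] (X →L[ℝ] X) :=
    e.symm.conj.trans LinearMap.toContinuousLinearMap
  have hC : ∀ T x, e (C T x) = T (e x) := by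
    intro T x; simp [C, LinearEquiv.conj_apply]
  have hup : ∀ p : PPar n m, ‖p‖ ≤ 1 / 3 → IsProjOnto Y (C (P0M n m h3 + phiM n m h3 p)) ∧
      ‖C (P0M n m h3 + phiM n m h3 p)‖ ≤ 4 / 3 := by
    intro p hp
    refine ⟨⟨fun x => ?_, fun y hy => ?_⟩, ?_⟩
    · rw [hYI, hC, LinearMap.add_apply]
      have a := P0M_mem (m := m) h3 (e x)
      have b := phiM_mem h3 hm p (e x)
      refine ⟨?_, fun i h1 h2 => ?_⟩
      · have a1 := a.1
        have b1 := b.1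
        simp only [Pi.add_apply]; linarith
      · rw [Pi.add_apply, a.2 i h1 h2, b.2 i h1 h2, add_zero]
    · apply e.injective
      rw [hYI] at hy
      rw [hC, LinearMap.add_apply, P0M_id h3 _ hy, phiM_kill h3 _ _ hy, add_zero]
    · refine ContinuousLinearMap.opNorm_le_bound _ (by norm_num) fun x => ?_
      have hx := (hle x ‖x‖ (norm_nonneg x)).1 le_rfl
      rw [hle _ _ (by positivity), hC]
      exact ⟨bound_l1 h3 hm p hp _ _ hx.1,
        fun l hl => bound_linf h3 hm p hp _ _ hx.1 l hl (hx.2 l hl)⟩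
  -- lower bound
  have hb : ∀ i : Fin n, (i : ℕ) < m → ‖e.symm (Pi.single i 1)‖ ≤ 1 := by
    intro i hi
    rw [hle _ _ zero_le_one]
    simp only [LinearEquiv.apply_symm_apply]
    constructor
    · rw [Finset.sum_eq_single i]
      · simp
      · intro b _ hb; rw [Pi.single_eq_of_ne hb]; simp
      · intro h; simp at h; omega
    · intro l hl
      rw [Pi.single_eq_of_ne]
      · simp
      · rintro rfl; omega
  have hlow : ∀ P : X →L[ℝ] X, IsProjOnto Y P → ∃ a0 a1 a2 : ℝ,
      e (P (e.symm (Pi.single ⟨0, by omega⟩ 1))) ⟨0, by omega⟩ = a0 ∧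
      e (P (e.symm (Pi.single ⟨0, by omega⟩ 1))) ⟨1, by omega⟩ = a1 ∧
      a0 + a1 + a2 = 0 ∧ 2 * a0 ≤ ‖P‖ ∧ 2 * (a1 + 1) ≤ ‖P‖ ∧ 2 * (a2 + 1) ≤ ‖P‖ := by
    intro P hP
    set z : Fin 3 → Fin n := fun i => ⟨i, by omega⟩ with hz
    have hPb : ∀ i : Fin n, (i : ℕ) < 3 → ‖P (e.symm (Pi.single i 1))‖ ≤ ‖P‖ := by
      intro i hi
      refine (P.le_opNorm _).trans ?_
      have := hb i (by omega)
      nlinarith [norm_nonneg P]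
    have hY3 : ∀ y ∈ Y, |e y ⟨0, by omega⟩| + |e y ⟨1, by omega⟩| + |e y ⟨2, by omega⟩| ≤ ‖y‖ := by
      intro y _
      have hx := ((hle y ‖y‖ (norm_nonneg y)).1 le_rfl).1
      rw [sum_split h3 hm] at hx
      have : 0 ≤ ∑ j : IdxA n m, |e y j.1| := Finset.sum_nonneg fun _ _ => abs_nonneg _
      linarith
    have hsh : ∀ i : Fin n, (i : ℕ) < 3 → e (P (e.symm (Pi.single i 1))) =
        e (P (e.symm (Pi.single ⟨0, by omega⟩ 1))) +
          (Pi.single i 1 - Pi.single ⟨0, by omega⟩ 1) := by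
      intro i hi
      have hmem : e.symm (Pi.single i 1 - Pi.single ⟨0, by omega⟩ 1) ∈ Y := by
        rw [hYI, LinearEquiv.apply_symm_apply]
        constructor
        · rcases fin_cases4 m h3 i with rfl | rfl | rfl | h | h
          · simp
          · simp [Pi.single_apply]
          · simp [Pi.single_apply]
          · omega
          · omega
        · intro l hl _
          rw [Pi.sub_apply, Pi.single_eq_of_ne, Pi.single_eq_of_ne, sub_zero] <;>
            (intro h; rw [h] at hl; first | omega | (simp at hl; done))
      have h := congrArg e (hP.2 _ hmem)
      rw [map_sub, map_sub, map_sub, ← map_sub e.symm, LinearEquiv.apply_symm_apply] at h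
      rw [← h]; abel
    refine ⟨_, _, e (P (e.symm (Pi.single ⟨0, by omega⟩ 1))) ⟨2, by omega⟩, rfl, rfl,
      ((hYI _).1 (hP.1 _)).1, ?_, ?_, ?_⟩
    all_goals
      have hs := ((hYI _).1 (hP.1 (e.symm (Pi.single ⟨0, by omega⟩ 1)))).1
    · have h1 := (hY3 _ (hP.1 (e.symm (Pi.single ⟨0, by omega⟩ 1)))).trans (hPb _ (by simp))
      have g0 := le_abs_self (e (P (e.symm (Pi.single ⟨0, by omega⟩ 1))) ⟨0, by omega⟩)
      have g1 := neg_abs_le (e (P (e.symm (Pi.single ⟨0, by omega⟩ 1))) ⟨1, by omega⟩)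
      have g2 := neg_abs_le (e (P (e.symm (Pi.single ⟨0, by omega⟩ 1))) ⟨2, by omega⟩)
      linarith
    · have h1 := (hY3 _ (hP.1 (e.symm (Pi.single ⟨1, by omega⟩ 1)))).trans (hPb _ (by simp))
      rw [hsh _ (by simp)] at h1
      simp [Pi.single_apply] at h1
      have g0 := neg_abs_le (e (P (e.symm (Pi.single ⟨0, by omega⟩ 1))) ⟨0, by omega⟩ + -1)
      have g1 := le_abs_self (e (P (e.symm (Pi.single ⟨0, by omega⟩ 1))) ⟨1, by omega⟩ + 1)
      have g2 := neg_abs_le (e (P (e.symm (Pi.single ⟨0, by omega⟩ 1))) ⟨2, by omega⟩)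
      linarith
    · have h1 := (hY3 _ (hP.1 (e.symm (Pi.single ⟨2, by omega⟩ 1)))).trans (hPb _ (by simp))
      rw [hsh _ (by simp)] at h1
      simp [Pi.single_apply] at h1
      have g0 := neg_abs_le (e (P (e.symm (Pi.single ⟨0, by omega⟩ 1))) ⟨0, by omega⟩ + -1)
      have g1 := neg_abs_le (e (P (e.symm (Pi.single ⟨0, by omega⟩ 1))) ⟨1, by omega⟩)
      have g2 := le_abs_self (e (P (e.symm (Pi.single ⟨0, by omega⟩ 1))) ⟨2, by omega⟩ + 1)
      linarith
  have hge : ∀ P : X →L[ℝ] X, IsProjOnto Y P → 4 / 3 ≤ ‖P‖ := by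
    intro P hP
    obtain ⟨a0, a1, a2, -, -, h1, h2, h3, h4⟩ := hlow P hP
    linarith
  have hconst : relProjConst Y = 4 / 3 := by
    apply IsLeast.csInf_eq
    constructor
    · obtain ⟨h1, h2⟩ := hup 0 (by simp)
      exact ⟨_, h1, le_antisymm h2 (hge _ h1)⟩
    · rintro c ⟨P, hP, rfl⟩
      exact hge P hP
  refine ⟨hconst, ?_⟩
  have hmin : ∀ p : PPar n m, ‖p‖ ≤ 1 / 3 → C (P0M n m h3 + phiM n m h3 p) ∈ MinProjSet Y := by
    intro p hp
    obtain ⟨h1, h2⟩ := hup p hp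
    exact ⟨h1, by rw [hconst]; exact le_antisymm h2 (hge _ h1)⟩
  let Φ : PPar n m →ₗ[ℝ] (X →L[ℝ] X) := C.toLinearMap ∘ₗ phiM n m h3
  have hΦ : Function.Injective Φ := C.injective.comp (phiM_inj h3 hm)
  have hdir : (affineSpan ℝ (MinProjSet Y)).direction = LinearMap.range Φ := by
    rw [direction_affineSpan]
    apply le_antisymm
    · rw [vectorSpan_def, Submodule.span_le]
      rintro _ ⟨P, hP, Q, hQ, rfl⟩
      obtain ⟨a0, a1, a2, ha0, ha1, h1, h2, h3', h4⟩ := hlow P hP.1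
      obtain ⟨b0, b1, b2, hb0, hb1, j1, j2, j3, j4⟩ := hlow Q hQ.1
      rw [hP.2, hconst] at h2 h3' h4
      rw [hQ.2, hconst] at j2 j3 j4
      have key : ∀ x, C.symm (P - Q) x = e (P (e.symm x)) - e (Q (e.symm x)) := by
        intro x
        have := hC (C.symm (P - Q)) (e.symm x)
        rw [LinearEquiv.apply_symm_apply, LinearEquiv.apply_symm_apply] at this
        rw [← this]; simp
      obtain ⟨p, hp⟩ := phiM_surj h3 hm (C.symm (P - Q)) (fun x => by
          rw [key, ← map_sub, ← hYI]
          exact Y.sub_mem (hP.1.1 _) (hQ.1.1 _)) (fun y hy => by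
          have hy' : e.symm y ∈ Y := by rw [hYI]; simpa using hy
          rw [key, hP.1.2 _ hy', hQ.1.2 _ hy', sub_self]) (by
          rw [key, Pi.sub_apply, ha0, hb0]; linarith) (by
          rw [key, Pi.sub_apply, ha1, hb1]; linarith)
      refine ⟨p, ?_⟩
      simp [Φ, hp]
    · rintro _ ⟨p, rfl⟩
      have hpos : 0 < 1 / (3 * (‖p‖ + 1)) := by positivity
      set ε := 1 / (3 * (‖p‖ + 1)) with hε
      have hs : ‖ε • p‖ ≤ 1 / 3 := by
        rw [norm_smul, Real.norm_of_nonneg hpos.le, hε, div_mul_eq_mul_div,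
          div_le_div_iff₀ (by positivity) (by norm_num)]
        linarith
      have hd := vsub_mem_vectorSpan ℝ (hmin _ hs) (hmin 0 (by simp))
      have : C (P0M n m h3 + phiM n m h3 (ε • p)) -ᵥ C (P0M n m h3 + phiM n m h3 0) = ε • Φ p := by
        simp [Φ]
      rw [this] at hd
      exact (Submodule.smul_mem_iff _ hpos.ne').1 hd
  rw [adim, hdir, LinearMap.finrank_range_of_inj hΦ, finrank_PPar n m hmn]
  obtain ⟨d, rfl⟩ : ∃ d, n = k + 1 + d := ⟨n - k - 1, by omega⟩
  obtain ⟨r, rfl⟩ : ∃ r, k = r + 2 := ⟨k - 2, by omega⟩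
  have q1 : r + 2 + 1 + d - m = r := by omega
  have q2 : m - 3 = d := by omega
  have q3 : r + 2 + 1 + d - (r + 2) = d + 1 := by omega
  rw [q1, q2, q3]
  have : (r + 2) * (d + 1) = r + d * (2 + r) + 2 := by ring
  omega
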